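/- Let (v₀¹,v₁) and (v₀²,v₂) be initialized pairs of clock valuations with (v₀¹,v₁) ≈ (v₀²,v₂). For any r ⊆ K⁺ and any clock valuation v¹ with v¹↓_r = v₁, there exists a clock valuation v² such that: (2.1) v²↓_r = v₂ and (v₀¹,v¹) ≈ (v₀²,v²); (2.2) v¹ is initial iff v² is initial, v¹ = v₀¹ iff v² = v₀², and for every clock constraint c, v¹ satisfies c iff v² satisfies c. -/

import Mathlib

open scoped BigOperators

namespace PTApaper

/-! ## Clock valuations -/

/-- A (raw) clock valuation on clocks `x_0, …, x_k`. -/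
abbrev Val (k : ℕ) := Fin (k+1) → ℝ

/-- A discrete clock valuation. -/
abbrev DVal (k : ℕ) := Fin (k+1) → ℕ

/-- A clock valuation takes nonnegative values. -/
def IsVal {k : ℕ} (v : Val k) : Prop := ∀ i, 0 ≤ v i

/-- A valuation is initial if the auxiliary clock `x_0` has value 0. -/
def Initial {k : ℕ} (v : Val k) : Prop := v 0 = 0

/-- The integral part `int(v)` of a valuation. -/
noncomputable def intPart {k : ℕ} (v : Val k) : DVal k := fun i => (⌊v i⌋).toNat

/-- The fractional parts of the relative representation `rel(v)`:
`fract(rel(v))(0) = fract (1 - fract (v 0))` and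
`fract(rel(v))(i) = fract (fract (v i) + fract(rel(v))(0))` for `i ∈ K⁺`. -/
noncomputable def relFract {k : ℕ} (v : Val k) : Fin (k+1) → ℝ := fun i =>
  if i = 0 then Int.fract (1 - Int.fract (v 0))
  else Int.fract (Int.fract (v i) + Int.fract (1 - Int.fract (v 0)))

/-- Synchronous clock progress `v + δ`. -/
def shift {k : ℕ} (v : Val k) (δ : ℝ) : Val k := fun i => v i + δ

/-- Clock reset `v↓_r`. -/
def resetVal {k : ℕ} (r : Finset (Fin (k+1))) (v : Val k) : Val k :=
  fun i => if i ∈ r then 0 else v i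

/-! ## Patterns -/

/-- A raw pattern: a finite sequence of subsets of `K⁰ ∪ K¹`, where the index
`(i, false)` stands for `i⁰` and `(i, true)` stands for `i¹`. -/
abbrev PatSeq (k : ℕ) := List (Finset (Fin (k+1) × Bool))

/-- The well-formedness conditions making `η = p₀,…,p_n` a pattern:
`0 ≤ n < 2(k+1)`, the `p_m` are nonempty and pairwise disjoint, `0⁰ ∈ p₀`,
and `p₀ ∪ … ∪ p_n = K⁰ ∪ K¹`. -/
def IsPattern {k : ℕ} (η : PatSeq k) : Prop :=
  η.length ≤ 2*(k+1) ∧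
  (∀ p ∈ η, p.Nonempty) ∧
  η.Pairwise Disjoint ∧
  ((0 : Fin (k+1)), false) ∈ η.getD 0 ∅ ∧
  (∀ x : Fin (k+1) × Bool, ∃ p ∈ η, x ∈ p)

/-- `bval v₀ v₁ b` is `v_b`. -/
def bval {k : ℕ} (v₀ v₁ : Val k) : Bool → Val k
  | false => v₀
  | true => v₁

/-- The defining ordering condition for "`(v₀,v₁)` has pattern `η = p₀,…,p_n`":
for all positions `m, m'`, copies `b, b'` and clocks `i, i'` with `i^b ∈ p_m` and
`i'^{b'} ∈ p_{m'}`, `fract(rel(v_b))(i) = fract(rel(v_{b'}))(i')` iff `m = m'`, and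
`fract(rel(v_b))(i) < fract(rel(v_{b'}))(i')` iff `m < m'`. -/
def HasPatternOrd {k : ℕ} (v₀ v₁ : Val k) (η : PatSeq k) : Prop :=
  ∀ m m' : Fin η.length, ∀ b b' : Bool, ∀ i i' : Fin (k+1),
    (i, b) ∈ η.get m → (i', b') ∈ η.get m' →
      ((relFract (bval v₀ v₁ b) i = relFract (bval v₀ v₁ b') i' ↔ m = m') ∧
       (relFract (bval v₀ v₁ b) i < relFract (bval v₀ v₁ b') i' ↔ (m : ℕ) < (m' : ℕ)))

/-- `(v₀,v₁)` has pattern `η` (written `[(v₀,v₁)] = η`). -/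
def PatternOf {k : ℕ} (v₀ v₁ : Val k) (η : PatSeq k) : Prop :=
  IsPattern η ∧ HasPatternOrd v₀ v₁ η

/-- A pattern is initial if it is the pattern of `(v₀,v₀)` for some initial valuation `v₀`. -/
def InitialPattern {k : ℕ} (η : PatSeq k) : Prop :=
  ∃ v₀ : Val k, IsVal v₀ ∧ Initial v₀ ∧ PatternOf v₀ v₀ η

/-- The equivalence `(v₀¹,v₁) ≈ (v₀²,v₂)`: same pattern and same integral parts. -/
def PairEquiv {k : ℕ} (va vb vc vd : Val k) : Prop :=
  (∃ η : PatSeq k, PatternOf va vb η ∧ PatternOf vc vd η) ∧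
  intPart va = intPart vc ∧ intPart vb = intPart vd

/-! ## now-position, Next, next, reset -/

/-- The index of the now-position, i.e. the position containing `0¹`. -/
def nowIdx {k : ℕ} (η : PatSeq k) : ℕ :=
  η.findIdx fun p => decide (((0 : Fin (k+1)), true) ∈ p)

/-- A merge-pattern: the now-position is the singleton `{0¹}`. -/
def IsMergePat {k : ℕ} (η : PatSeq k) : Prop :=
  η.getD (nowIdx η) ∅ = ({((0 : Fin (k+1)), true)} : Finset (Fin (k+1) × Bool))

/-- A split-pattern: a pattern that is not a merge-pattern. -/
def IsSplitPat {k : ℕ} (η : PatSeq k) : Prop := ¬ IsMergePat η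

/-- The next pattern `Next(η)`. -/
def NextPat {k : ℕ} (η : PatSeq k) : PatSeq k :=
  let i := nowIdx η
  if η.getD i ∅ = ({((0 : Fin (k+1)), true)} : Finset (Fin (k+1) × Bool)) then
    -- merge case : `p₀, …, p_{i-1} ∪ {0¹}, p_{i+1}, …, p_n`
    η.take (i-1) ++ [η.getD (i-1) ∅ ∪ {((0 : Fin (k+1)), true)}] ++ η.drop (i+1)
  else if i = 0 then
    -- split case with `i = 0` : `p₀ ∖ {0¹}, p₁, …, p_n, {0¹}`
    (η.getD 0 ∅ \ {((0 : Fin (k+1)), true)}) :: (η.drop 1 ++ [{((0 : Fin (k+1)), true)}])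
  else
    -- split case with `i > 0` : `p₀, …, p_{i-1}, {0¹}, p_i ∖ {0¹}, p_{i+1}, …, p_n`
    η.take i ++ [{((0 : Fin (k+1)), true)}, η.getD i ∅ \ {((0 : Fin (k+1)), true)}]
      ++ η.drop (i+1)

/-- The counter update of `next(η,u)`. -/
def nextD {k : ℕ} (η : PatSeq k) (u : DVal k) : DVal k :=
  let i := nowIdx η
  if η.getD i ∅ = ({((0 : Fin (k+1)), true)} : Finset (Fin (k+1) × Bool)) then
    fun j =>
      if j = 0 then (if i = 1 then u 0 + 1 else u 0)
      else (if (j, true) ∈ η.getD (i-1) ∅ then u j + 1 else u j)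
  else u

/-- `next(η,u)`. -/
def nextPair {k : ℕ} (η : PatSeq k) (u : DVal k) : PatSeq k × DVal k :=
  (NextPat η, nextD η u)

/-- The pattern part of `reset_r(η,u)`: all indices `j¹`, `j ∈ r`, are moved into the
now-position, and entries that become empty are deleted. -/
def ResetPat {k : ℕ} (r : Finset (Fin (k+1))) (η : PatSeq k) : PatSeq k :=
  let r1 : Finset (Fin (k+1) × Bool) := r.image (fun j => (j, true))
  let i := nowIdx η
  (η.mapIdx (fun m p => if m = i then p ∪ r1 else p \ r1)).filter (fun p => decide (p ≠ ∅))

/-- The counter update of `reset_r(η,u)`. -/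
def resetD {k : ℕ} (r : Finset (Fin (k+1))) (u : DVal k) : DVal k :=
  fun j => if j ∈ r then 0 else u j

/-- `reset_r(η,u)`. -/
def resetPair {k : ℕ} (r : Finset (Fin (k+1))) (η : PatSeq k) (u : DVal k) :
    PatSeq k × DVal k :=
  (ResetPat r η, resetD r u)

/-! ## Pattern changes -/

/-- `v` has no pattern change for `δ`. -/
def NoChange {k : ℕ} (v₀ v : Val k) (δ : ℝ) : Prop :=
  ∃ η : PatSeq k, PatternOf v₀ v η ∧
    ∀ δ', 0 ≤ δ' → δ' ≤ δ → PatternOf v₀ (shift v δ') η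

/-- `v` has one pattern change for `δ`. -/
def OneChange {k : ℕ} (v₀ v : Val k) (δ : ℝ) : Prop :=
  ∃ η η' : PatSeq k, PatternOf v₀ v η ∧ PatternOf v₀ (shift v δ) η' ∧
    NextPat η = η' ∧
    ((∀ δ', 0 < δ' → δ' < δ → PatternOf v₀ (shift v δ') η) ∨
     (∀ δ', 0 < δ' → δ' < δ → PatternOf v₀ (shift v δ') η'))

/-- `v` has `n` pattern changes for `δ` (for `n ≥ 1`): `δ = δ₁ + … + δ_n` with each
`δ_j > 0` and `v + δ₁ + … + δ_j` has one pattern change for `δ_{j+1}`. -/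
def NChanges {k : ℕ} (v₀ v : Val k) (n : ℕ) (δ : ℝ) : Prop :=
  ∃ d : ℕ → ℝ, (∀ j < n, 0 < d j) ∧ (∑ j ∈ Finset.range n, d j) = δ ∧
    ∀ j < n, OneChange v₀ (shift v (∑ j' ∈ Finset.range j, d j')) (d j)

/-! ## Clock constraints -/

/-- Comparison operators `<, ≤, =, ≥, >`. -/
inductive CCmp | lt | le | eq | ge | gt

/-- Evaluation of a comparison operator on reals. -/
def CCmp.evalR : CCmp → ℝ → ℝ → Prop
  | .lt, a, b => a < b
  | .le, a, b => a ≤ b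
  | .eq, a, b => a = b
  | .ge, a, b => a ≥ b
  | .gt, a, b => a > b

/-- Clock constraints over the clocks `x_1, …, x_k` (indexed by `Fin k`, clock
`x_{i+1}` for `i : Fin k`): Boolean combinations of `x_i - x_j # d` and `x_i # d`. -/
inductive CC (k : ℕ)
  | diff (i j : Fin k) (op : CCmp) (d : ℕ) : CC k
  | single (i : Fin k) (op : CCmp) (d : ℕ) : CC k
  | not (c : CC k) : CC k
  | and (c₁ c₂ : CC k) : CC k

/-- `v ∈ c` : the valuation `v` satisfies the clock constraint `c`. -/
def CC.sat {k : ℕ} (v : Val k) : CC k → Prop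
  | .diff i j op d => op.evalR (v i.succ - v j.succ) (d : ℝ)
  | .single i op d => op.evalR (v i.succ) (d : ℝ)
  | .not c => ¬ c.sat v
  | .and c₁ c₂ => c₁.sat v ∧ c₂.sat v

/-- The position (in `η`) of an index `x ∈ K⁰ ∪ K¹`. -/
def posOf {k : ℕ} (η : PatSeq k) (x : Fin (k+1) × Bool) : ℕ :=
  η.findIdx fun p => decide (x ∈ p)

/-- The truth value, given by pattern `η`, of the fractional ordering
`fract(x_a) > fract(x_b)`. -/
def fracGtP {k : ℕ} (η : PatSeq k) (a b : Fin (k+1)) : Prop :=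
  let i := posOf η ((0 : Fin (k+1)), true)
  let m₁ := posOf η (a, true)
  let m₂ := posOf η (b, true)
  (m₁ < i ∧ i ≤ m₂) ∨ (m₂ < m₁ ∧ m₁ < i) ∨ (i ≤ m₂ ∧ m₂ < m₁)

/-- The truth value, given by pattern `η`, of `fract(x_a) = fract(x_b)`. -/
def fracEqP {k : ℕ} (η : PatSeq k) (a b : Fin (k+1)) : Prop :=
  posOf η (a, true) = posOf η (b, true)

/-- The truth value, given by pattern `η`, of `fract(x_a) = 0`. -/
def fracZeroP {k : ℕ} (η : PatSeq k) (a : Fin (k+1)) : Prop :=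
  posOf η (a, true) = posOf η ((0 : Fin (k+1)), true)

/-- `u ∈ c^η` : the discrete valuation `u` satisfies the constraint `c^η`, obtained by
rewriting `c` as `I(c)` over integral parts and fractional orderings and substituting the
truth values of the fractional orderings determined by the pattern `η`. -/
def CC.satP {k : ℕ} (η : PatSeq k) (u : DVal k) : CC k → Prop
  | .diff i j op d =>
      let I : ℤ := (u i.succ : ℤ) - (u j.succ : ℤ)
      (match op with
      | .lt => I < d ∨ (I = d ∧ fracGtP η j.succ i.succ)
      | .le => I < d ∨ (I = d ∧ (fracGtP η j.succ i.succ ∨ fracEqP η i.succ j.succ))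
      | .eq => I = d ∧ fracEqP η i.succ j.succ
      | .ge => I > d ∨ (I = d ∧ (fracGtP η i.succ j.succ ∨ fracEqP η i.succ j.succ))
      | .gt => I > d ∨ (I = d ∧ fracGtP η i.succ j.succ))
  | .single i op d =>
      let I : ℤ := (u i.succ : ℤ)
      (match op with
      | .lt => I < d
      | .le => I < d ∨ (I = d ∧ fracZeroP η i.succ)
      | .eq => I = d ∧ fracZeroP η i.succ
      | .ge => I ≥ d
      | .gt => I > d ∨ (I = d ∧ ¬ fracZeroP η i.succ))
  | .not c => ¬ c.satP η u
  | .and c₁ c₂ => c₁.satP η u ∧ c₂.satP η u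

/-! ## Pushdown timed automata -/

/-- A pushdown timed automaton `⟨S, {x₁,…,x_k}, Inv, R, Γ, PD⟩`:
`Inv` assigns an invariant to each state, `R s s' = (Rc s s', Rr s s')` assigns a reset
condition and a set of clock resets (a subset of `K⁺`) to each edge, and
`PD s s' = (PDa s s', PDw s s')` assigns a stack operation to each edge. -/
structure PTA (k : ℕ) (S : Type) (Γ : Type) where
  Inv : S → CC k
  Rc : S → S → CC k
  Rr : S → S → Finset (Fin (k+1))
  hRr : ∀ s s', (0 : Fin (k+1)) ∉ Rr s s'
  PDa : S → S → Γ
  PDw : S → S → List Γ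

/-- A configuration `(s, v, w)` of a PTA. -/
abbrev Config (k : ℕ) (S Γ : Type) := S × Val k × List Γ

/-- The one-step transition relation `→_A` of a PTA. -/
def Step {k : ℕ} {S Γ : Type} (A : PTA k S Γ) (c₁ c₂ : Config k S Γ) : Prop :=
  -- progress transition
  (c₁.1 = c₂.1 ∧ c₁.2.2 = c₂.2.2 ∧
    ∃ δ : ℝ, 0 < δ ∧ c₂.2.1 = shift c₁.2.1 δ ∧
      ∀ δ', 0 ≤ δ' → δ' ≤ δ → (A.Inv c₁.1).sat (shift c₁.2.1 δ')) ∨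
  -- reset transition
  ((A.Inv c₁.1).sat c₁.2.1 ∧ (A.Rc c₁.1 c₂.1).sat c₁.2.1 ∧
    c₂.2.1 = resetVal (A.Rr c₁.1 c₂.1) c₁.2.1 ∧ (A.Inv c₂.1).sat c₂.2.1 ∧
    ∃ w : List Γ, c₁.2.2 = A.PDa c₁.1 c₂.1 :: w ∧ c₂.2.2 = A.PDw c₁.1 c₂.1 ++ w)

/-- `→*_A`, the transitive closure of `→_A`. -/
def Reach {k : ℕ} {S Γ : Type} (A : PTA k S Γ) : Config k S Γ → Config k S Γ → Prop :=
  Relation.TransGen (Step A)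

/-- `(s₀,u₀,w₀) →*_{A,η} (s₁,u₁,w₁)`. -/
def ReachPat {k : ℕ} {S Γ : Type} (A : PTA k S Γ) (η : PatSeq k)
    (s₀ : S) (u₀ : DVal k) (w₀ : List Γ) (s₁ : S) (u₁ : DVal k) (w₁ : List Γ) : Prop :=
  ∃ v₀ v₁ : Val k, IsVal v₀ ∧ IsVal v₁ ∧ v₀ 0 = 0 ∧
    intPart v₀ = u₀ ∧ intPart v₁ = u₁ ∧ PatternOf v₀ v₁ η ∧
    Reach A (s₀, v₀, w₀) (s₁, v₁, w₁)

/-! ## The pattern graph -/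

/-- A configuration `(s, η, u, w)` of the pattern graph. -/
abbrev GConfig (k : ℕ) (S Γ : Type) := S × PatSeq k × DVal k × List Γ

/-- The one-step transition relation `→_G` of the pattern graph `G` of a PTA `A`,
through progress edges, stay edges and reset edges. -/
def GStep {k : ℕ} {S Γ : Type} (A : PTA k S Γ) (c₁ c₂ : GConfig k S Γ) : Prop :=
  -- progress edge
  (c₁.1 = c₂.1 ∧ c₁.2.2.2 = c₂.2.2.2 ∧
    nextPair c₁.2.1 c₁.2.2.1 = (c₂.2.1, c₂.2.2.1) ∧
    (A.Inv c₁.1).satP c₁.2.1 c₁.2.2.1 ∧ (A.Inv c₁.1).satP c₂.2.1 c₂.2.2.1) ∨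
  -- stay edge
  (c₁ = c₂ ∧ IsMergePat c₁.2.1 ∧ (A.Inv c₁.1).satP c₁.2.1 c₁.2.2.1) ∨
  -- reset edge
  (resetPair (A.Rr c₁.1 c₂.1) c₁.2.1 c₁.2.2.1 = (c₂.2.1, c₂.2.2.1) ∧
    ((A.Rc c₁.1 c₂.1).and (A.Inv c₁.1)).satP c₁.2.1 c₁.2.2.1 ∧
    (A.Inv c₂.1).satP c₂.2.1 c₂.2.2.1 ∧
    ∃ w : List Γ, c₁.2.2.2 = A.PDa c₁.1 c₂.1 :: w ∧ c₂.2.2.2 = A.PDw c₁.1 c₂.1 ++ w)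

/-- `→*_G`, the transitive closure of `→_G`. -/
def GReach {k : ℕ} {S Γ : Type} (A : PTA k S Γ) : GConfig k S Γ → GConfig k S Γ → Prop :=
  Relation.TransGen (GStep A)

end PTApaper
namespace PTApaper

/-!
A clock valuation is determined by its integral parts and by its relative fractional parts, seen as
positions in `[0, 1)`; a pattern records exactly the relative order of the positions of both
valuations of a pair. Equivalent pairs therefore differ by a strictly increasing map `g` of
positions fixing `0` and `1`, and by density `g` extends to the finitely many further positions of
`v¹`. Let `v²` have the integral parts of `v¹` and its positions moved by `g`. Resetting a clock
replaces its position by that of clock `0`, which commutes with `g`, so `v²` resets to `v₂`.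
Initiality, equality with `v₀` and all clock constraints only depend on the integral parts and on
the order of the positions.
-/

section SameOrder

variable {ι α β : Type*} [LinearOrder α] [LinearOrder β]

/-- Two families of elements of linear orders are in the same relative order, ties included.
Phrased through `cmp`, so that `<`, `=` and `>` are compared at once. -/
def SameOrder (p : ι → α) (q : ι → β) : Prop :=
  ∀ x y, cmp (p x) (p y) = cmp (q x) (q y)

lemma SameOrder.eq_iff_eq {p : ι → α} {q : ι → β} (h : SameOrder p q) (x y : ι) :
    p x = p y ↔ q x = q y :=
  eq_iff_eq_of_cmp_eq_cmp (h x y)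

lemma SameOrder.lt_iff_lt {p : ι → α} {q : ι → β} (h : SameOrder p q) (x y : ι) :
    p x < p y ↔ q x < q y :=
  lt_iff_lt_of_cmp_eq_cmp (h x y)

lemma sameOrder_comp_of_strictMonoOn {p : ι → α} {g : α → β}
    (hg : StrictMonoOn g (Set.range p)) : SameOrder p (g ∘ p) :=
  fun x y => (hg.cmp_map_eq (Set.mem_range_self x) (Set.mem_range_self y)).symm

lemma cmp_eq_cmp_iff {a b : α} {c d : β} :
    cmp a b = cmp c d ↔ (a = b ↔ c = d) ∧ (a < b ↔ c < d) := by
  refine ⟨fun h => ⟨eq_iff_eq_of_cmp_eq_cmp h, lt_iff_lt_of_cmp_eq_cmp h⟩, ?_⟩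
  rintro ⟨heq, hlt⟩
  rcases lt_trichotomy c d with h | h | h
  · rw [h.cmp_eq_lt, (hlt.2 h).cmp_eq_lt]
  · rw [h.cmp_eq_eq, (heq.2 h).cmp_eq_eq]
  · have hba : b < a :=
      lt_of_le_of_ne (not_lt.1 fun hab => h.not_gt (hlt.1 hab)) fun hba => h.ne' (heq.1 hba.symm)
    rw [h.cmp_eq_gt, hba.cmp_eq_gt]

end SameOrder

section StrictMonoExtension

variable {α β : Type*} [LinearOrder α] [LinearOrder β]
  [DenselyOrdered β] [NoMinOrder β] [NoMaxOrder β] [Nonempty β]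

lemma exists_strictMonoOn_insert_eqOn {f : α → β} {s : Set α} (hs : s.Finite)
    (hf : StrictMonoOn f s) (a : α) :
    ∃ g : α → β, StrictMonoOn g (insert a s) ∧ Set.EqOn g f s := by
  by_cases ha : a ∈ s
  · exact ⟨f, by rwa [Set.insert_eq_of_mem ha], Set.eqOn_refl f s⟩
  obtain ⟨b, hlo, hhi⟩ : ∃ b, (∀ x ∈ s, x < a → f x < b) ∧ ∀ x ∈ s, a < x → b < f x := by
    obtain ⟨b, hlo, hhi⟩ := Order.exists_between_finsets
      ((hs.sep (· < a)).image f).toFinset ((hs.sep (a < ·)).image f).toFinset (by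
        simp only [Set.Finite.mem_toFinset]
        rintro _ ⟨x, ⟨hx, hxa⟩, rfl⟩ _ ⟨y, ⟨hy, hay⟩, rfl⟩
        exact hf hx hy (hxa.trans hay))
    simp only [Set.Finite.mem_toFinset, Set.forall_mem_image] at hlo hhi
    exact ⟨b, fun x hx hxa => hlo ⟨hx, hxa⟩, fun x hx hax => hhi ⟨hx, hax⟩⟩
  have hupdate : Set.EqOn (Function.update f a b) f s := fun x hx =>
    Function.update_of_ne (ne_of_mem_of_not_mem hx ha) b f
  refine ⟨Function.update f a b, strictMonoOn_insert_iff.2 ⟨?_, ?_, hf.congr hupdate.symm⟩,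
    hupdate⟩
  · intro x hx hxa
    rw [hupdate hx, Function.update_self]
    exact hlo x hx hxa
  · intro x hx hax
    rw [hupdate hx, Function.update_self]
    exact hhi x hx hax

lemma exists_strictMonoOn_union_eqOn {f : α → β} {s t : Set α} (hs : s.Finite) (ht : t.Finite)
    (hf : StrictMonoOn f s) : ∃ g : α → β, StrictMonoOn g (s ∪ t) ∧ Set.EqOn g f s := by
  induction t, ht using Set.Finite.induction_on with
  | empty => exact ⟨f, by rwa [Set.union_empty], Set.eqOn_refl f s⟩
  | @insert a t _ ht ih =>
    obtain ⟨g, hg, hgf⟩ := ih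
    obtain ⟨g', hg', hg'g⟩ := exists_strictMonoOn_insert_eqOn (hs.union ht) hg a
    exact ⟨g', by rwa [Set.union_insert], (hg'g.mono Set.subset_union_left).trans hgf⟩

end StrictMonoExtension

-- Adjoining the breakpoint `1 ↦ 1` before extending keeps the new values below `1`.
lemma SameOrder.exists_strictMonoOn_comp_eq {ι : Type*} [Finite ι] {p q : ι → ℝ}
    (h : SameOrder p q) (hp : ∀ x, p x < 1) (hq : ∀ x, q x < 1) {o : ι} (hpo : p o = 0)
    (hqo : q o = 0) {t : Set ℝ} (ht : t.Finite) (htI : t ⊆ Set.Ico 0 1) :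
    ∃ g : ℝ → ℝ, StrictMonoOn g (Set.range p ∪ t) ∧ Set.MapsTo g t (Set.Ico 0 1) ∧ g ∘ p = q := by
  have hfp : Function.extend p q id ∘ p = q :=
    Function.FactorsThrough.extend_comp id fun x y => (h.eq_iff_eq x y).1
  have hf1 : Function.extend p q id 1 = 1 :=
    Function.extend_apply' q id 1 fun ⟨x, hx⟩ => (hp x).ne hx
  have hf : StrictMonoOn (Function.extend p q id) (insert 1 (Set.range p)) := by
    refine strictMonoOn_insert_iff.2 ⟨?_, ?_, ?_⟩
    · rintro _ ⟨x, rfl⟩ -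
      have hx : Function.extend p q id (p x) = q x := congrFun hfp x
      rw [hx, hf1]
      exact hq x
    · rintro _ ⟨x, rfl⟩ hx
      exact absurd hx (hp x).not_gt
    · rintro _ ⟨x, rfl⟩ _ ⟨y, rfl⟩ hxy
      have hqxy := (h.lt_iff_lt x y).1 hxy
      rwa [← hfp] at hqxy
  obtain ⟨g, hg, hgf⟩ :=
    exists_strictMonoOn_union_eqOn ((Set.finite_range p).insert 1) ht hf
  have hgp : g ∘ p = q :=
    (funext fun x => hgf (Set.mem_insert_of_mem 1 (Set.mem_range_self x))).trans hfp
  have hg0 : g 0 = 0 :=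
    calc g 0 = (g ∘ p) o := by rw [Function.comp_apply, hpo]
      _ = 0 := by rw [hgp, hqo]
  have hg1 : g 1 = 1 := (hgf (Set.mem_insert 1 _)).trans hf1
  refine ⟨g, hg.mono (Set.union_subset_union_left t (Set.subset_insert 1 _)), ?_, hgp⟩
  have hzero : (0 : ℝ) ∈ insert 1 (Set.range p) ∪ t := .inl (.inr ⟨o, hpo⟩)
  have hone : (1 : ℝ) ∈ insert 1 (Set.range p) ∪ t := .inl (.inl rfl)
  intro y hy
  exact ⟨hg0 ▸ hg.monotoneOn hzero (.inr hy) (htI hy).1, hg1 ▸ hg (.inr hy) hone (htI hy).2⟩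

section Fract

variable {R : Type*} [CommRing R] [LinearOrder R] [IsStrictOrderedRing R] [FloorRing R]

lemma fract_sub_eq_ite {x t : R} (hx : x ∈ Set.Ico 0 1) (ht : t ∈ Set.Ico 0 1) :
    Int.fract (x - t) = if x < t then x - t + 1 else x - t := by
  obtain ⟨hx0, hx1⟩ := hx
  obtain ⟨ht0, ht1⟩ := ht
  rw [Int.fract_eq_iff]
  split_ifs with hxt
  · exact ⟨by linarith, by linarith, -1, by push_cast; ring⟩
  · exact ⟨by linarith, by linarith, 0, by push_cast; ring⟩

-- Rotating the circle by `-t` moves the points below `t` behind all the others.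
lemma cmp_fract_sub_fract_sub {x y t : R} (hx : x ∈ Set.Ico 0 1) (hy : y ∈ Set.Ico 0 1)
    (ht : t ∈ Set.Ico 0 1) :
    cmp (Int.fract (x - t)) (Int.fract (y - t)) =
      (cmp (decide (x < t)) (decide (y < t))).then (cmp x y) := by
  rw [fract_sub_eq_ite hx ht, fract_sub_eq_ite hy ht]
  obtain ⟨hx0, hx1⟩ := hx
  obtain ⟨hy0, hy1⟩ := hy
  by_cases hxt : x < t <;> by_cases hyt : y < t
  · simp [hxt, hyt, sub_eq_add_neg]
  · have hlt : y - t < x - t + 1 := by linarith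
    rw [if_pos hxt, if_neg hyt, hlt.cmp_eq_gt, decide_eq_true hxt, decide_eq_false hyt]
    rfl
  · have hlt : x - t < y - t + 1 := by linarith
    rw [if_neg hxt, if_pos hyt, hlt.cmp_eq_lt, decide_eq_false hxt, decide_eq_true hyt]
    rfl
  · simp [hxt, hyt, sub_eq_add_neg]

lemma cmp_intCast_add_eq_then {f : R} (hf : |f| < 1) (n d : ℤ) :
    cmp ((n : R) + f) d = (cmp n d).then (cmp f 0) := by
  obtain ⟨hlo, hhi⟩ := abs_lt.1 hf
  rcases lt_trichotomy n d with h | rfl | h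
  · have hnd : (n : R) + 1 ≤ d := mod_cast h
    have hlt : (n : R) + f < d := by linarith
    rw [hlt.cmp_eq_lt, h.cmp_eq_lt]
    rfl
  · have hadd : cmp ((n : R) + f) n = cmp ((n : R) + f) (n + 0) := by rw [add_zero]
    rw [hadd, cmp_add_left, cmp_self_eq_eq]
    rfl
  · have hdn : (d : R) + 1 ≤ n := mod_cast h
    have hlt : (d : R) < n + f := by linarith
    rw [hlt.cmp_eq_gt, h.cmp_eq_gt]
    rfl

lemma cmp_intCast_eq_then (x : R) (d : ℤ) :
    cmp x d = (cmp ⌊x⌋ d).then (cmp (Int.fract x) 0) := by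
  rw [← cmp_intCast_add_eq_then (by rw [Int.abs_fract]; exact Int.fract_lt_one x),
    Int.floor_add_fract]

lemma cmp_sub_intCast_eq_then (x y : R) (d : ℤ) :
    cmp (x - y) d = (cmp (⌊x⌋ - ⌊y⌋) d).then (cmp (Int.fract x) (Int.fract y)) := by
  have hf : |Int.fract x - Int.fract y| < 1 :=
    abs_sub_lt_of_nonneg_of_lt (Int.fract_nonneg x) (Int.fract_lt_one x) (Int.fract_nonneg y)
      (Int.fract_lt_one y)
  have hxy : x - y = ((⌊x⌋ - ⌊y⌋ : ℤ) : R) + (Int.fract x - Int.fract y) := by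
    rw [Int.fract, Int.fract]
    push_cast
    ring
  rw [← cmp_sub_zero (Int.fract x), ← cmp_intCast_add_eq_then hf, ← hxy]

end Fract

section LevelSets

variable {ι α : Type*} [Fintype ι] [LinearOrder α] (p : ι → α)

/-- The nonempty level sets of `p`, listed by increasing value of `p`. The pattern of a pair of
valuations arises this way. -/
def levelSets : List (Finset ι) :=
  ((Finset.univ.image p).sort).map fun a => Finset.univ.filter fun x => p x = a

lemma length_levelSets_le : (levelSets p).length ≤ Fintype.card ι := by
  rw [levelSets, List.length_map, Finset.length_sort]
  exact Finset.card_image_le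

lemma exists_mem_levelSets (x : ι) : ∃ s ∈ levelSets p, x ∈ s :=
  ⟨_, List.mem_map_of_mem (a := p x) (by simp), by simp⟩

variable {p}

lemma nonempty_of_mem_levelSets {s : Finset ι} (hs : s ∈ levelSets p) : s.Nonempty := by
  obtain ⟨a, ha, rfl⟩ := List.mem_map.1 hs
  obtain ⟨x, -, hx⟩ := Finset.mem_image.1 ((Finset.mem_sort _).1 ha)
  exact ⟨x, by simp [hx]⟩

lemma eq_of_mem_levelSets {s : Finset ι} (hs : s ∈ levelSets p) {x y : ι} (hx : x ∈ s)
    (hy : y ∈ s) : p x = p y := by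
  obtain ⟨a, -, rfl⟩ := List.mem_map.1 hs
  rw [(Finset.mem_filter.1 hx).2, (Finset.mem_filter.1 hy).2]

lemma pairwise_lt_levelSets :
    (levelSets p).Pairwise fun s t => ∀ x ∈ s, ∀ y ∈ t, p x < p y := by
  refine List.pairwise_map.2 ((Finset.sortedLT_sort _).pairwise.imp fun hab x hx y hy => ?_)
  rwa [(Finset.mem_filter.1 hx).2, (Finset.mem_filter.1 hy).2]

lemma pairwise_disjoint_levelSets : (levelSets p).Pairwise Disjoint :=
  pairwise_lt_levelSets.imp fun h =>
    Finset.disjoint_left.2 fun x hxs hxt => (h x hxs x hxt).false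

lemma cmp_eq_cmp_of_mem_levelSets {m m' : Fin (levelSets p).length} {x y : ι}
    (hx : x ∈ (levelSets p).get m) (hy : y ∈ (levelSets p).get m') :
    cmp (p x) (p y) = cmp m m' := by
  have hlt := List.pairwise_iff_get.1 (pairwise_lt_levelSets (p := p))
  rcases lt_trichotomy m m' with h | rfl | h
  · rw [(hlt m m' h x hx y hy).cmp_eq_lt, h.cmp_eq_lt]
  · rw [(eq_of_mem_levelSets (List.get_mem _ m) hx hy).cmp_eq_eq, cmp_self_eq_eq]
  · rw [(hlt m' m h y hy x hx).cmp_eq_gt, h.cmp_eq_gt]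

lemma mem_getD_zero_levelSets {o : ι} (ho : ∀ x, p o ≤ p x) : o ∈ (levelSets p).getD 0 ∅ := by
  obtain ⟨s, hs, hos⟩ := exists_mem_levelSets p o
  obtain ⟨m, rfl⟩ := List.get_of_mem hs
  let first : Fin (levelSets p).length := ⟨0, m.pos⟩
  obtain ⟨x, hx⟩ := nonempty_of_mem_levelSets (List.get_mem (levelSets p) first)
  have hm : m ≤ first :=
    (le_iff_le_of_cmp_eq_cmp (cmp_eq_cmp_of_mem_levelSets hos hx)).1 (ho x)
  have hm0 : m = first := Fin.ext (Nat.le_zero.1 hm)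
  rw [List.getD_eq_getElem _ _ m.pos]
  exact hm0 ▸ hos

end LevelSets

section Relative

variable {k : ℕ}

lemma relFract_mem_Ico (v : Val k) (i : Fin (k + 1)) : relFract v i ∈ Set.Ico (0 : ℝ) 1 := by
  unfold relFract
  split_ifs <;> exact ⟨Int.fract_nonneg _, Int.fract_lt_one _⟩

lemma relFract_zero (v : Val k) : relFract v 0 = Int.fract (-v 0) := by
  rw [relFract, if_pos rfl]
  exact Int.fract_eq_fract.2 ⟨1 + ⌊v 0⌋, by rw [Int.fract]; push_cast; ring⟩

lemma relFract_of_ne_zero (v : Val k) {i : Fin (k + 1)} (hi : i ≠ 0) :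
    relFract v i = Int.fract (v i - v 0) := by
  rw [relFract, if_neg hi]
  refine Int.fract_eq_fract.2 ⟨1 + ⌊v 0⌋ - ⌊v i⌋ - ⌊1 - Int.fract (v 0)⌋, ?_⟩
  rw [Int.fract, Int.fract, Int.fract]
  push_cast
  ring

lemma fract_zero_eq_fract_neg_relFract (v : Val k) :
    Int.fract (v 0) = Int.fract (-relFract v 0) := by
  rw [relFract_zero]
  refine Int.fract_eq_fract.2 ⟨-⌊-v 0⌋, ?_⟩
  rw [Int.fract]
  push_cast
  ring

lemma fract_eq_fract_relFract_sub (v : Val k) {i : Fin (k + 1)} (hi : i ≠ 0) :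
    Int.fract (v i) = Int.fract (relFract v i - relFract v 0) := by
  rw [relFract_zero, relFract_of_ne_zero v hi]
  refine Int.fract_eq_fract.2 ⟨⌊v i - v 0⌋ - ⌊-v 0⌋, ?_⟩
  rw [Int.fract, Int.fract]
  push_cast
  ring

lemma eq_of_floor_eq_of_relFract_eq {v w : Val k} (hfloor : ∀ i, ⌊v i⌋ = ⌊w i⌋)
    (hrel : relFract v = relFract w) : v = w := by
  funext i
  have hfract : Int.fract (v i) = Int.fract (w i) := by
    rcases eq_or_ne i 0 with rfl | hi
    · rw [fract_zero_eq_fract_neg_relFract, hrel, fract_zero_eq_fract_neg_relFract]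
    · rw [fract_eq_fract_relFract_sub v hi, hrel, fract_eq_fract_relFract_sub w hi]
  rw [← Int.floor_add_fract (v i), hfloor, hfract, Int.floor_add_fract]

lemma exists_floor_eq_relFract_eq (n : Fin (k + 1) → ℤ) {ρ : Fin (k + 1) → ℝ}
    (hρ : ∀ i, ρ i ∈ Set.Ico (0 : ℝ) 1) :
    ∃ v : Val k, (∀ i, ⌊v i⌋ = n i) ∧ relFract v = ρ := by
  let v : Val k := fun i => n i + Int.fract (if i = 0 then -ρ 0 else ρ i - ρ 0)
  refine ⟨v, fun i => by simp [v], funext fun i => ?_⟩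
  rw [← Int.fract_eq_self.2 (hρ i)]
  rcases eq_or_ne i 0 with rfl | hi
  · rw [relFract_zero]
    refine Int.fract_eq_fract.2 ⟨⌊-ρ 0⌋ - n 0, ?_⟩
    simp only [v, if_pos, Int.fract]
    push_cast
    ring
  · rw [relFract_of_ne_zero v hi]
    refine Int.fract_eq_fract.2 ⟨n i - n 0 - ⌊ρ i - ρ 0⌋ + ⌊-ρ 0⌋, ?_⟩
    simp only [v, if_pos, if_neg hi, Int.fract]
    push_cast
    ring

lemma initial_iff_floor_eq_zero_and_relFract_eq_zero {v : Val k} :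
    Initial v ↔ ⌊v 0⌋ = 0 ∧ relFract v 0 = 0 := by
  rw [Initial, relFract_zero, Int.fract_neg_eq_zero]
  refine ⟨fun h => by simp [h], fun ⟨hfloor, hfract⟩ => ?_⟩
  rw [← Int.floor_add_fract (v 0), hfloor, hfract, Int.cast_zero, add_zero]

lemma floor_eq_of_intPart_eq {v w : Val k} (hv : IsVal v) (hw : IsVal w)
    (h : intPart v = intPart w) (i : Fin (k + 1)) : ⌊v i⌋ = ⌊w i⌋ := by
  have hi : ⌊v i⌋.toNat = ⌊w i⌋.toNat := congrFun h i
  rw [← Int.toNat_of_nonneg (Int.floor_nonneg.2 (hv i)), hi,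
    Int.toNat_of_nonneg (Int.floor_nonneg.2 (hw i))]

lemma intPart_eq_of_floor_eq {v w : Val k} (h : ∀ i, ⌊v i⌋ = ⌊w i⌋) : intPart v = intPart w :=
  funext fun i => congrArg Int.toNat (h i)

lemma isVal_of_floor_eq {v w : Val k} (hv : IsVal v) (h : ∀ i, ⌊w i⌋ = ⌊v i⌋) : IsVal w :=
  fun i => Int.floor_nonneg.1 (h i ▸ Int.floor_nonneg.2 (hv i))

end Relative

section Reset

variable {k : ℕ} {r : Finset (Fin (k + 1))}

lemma isVal_resetVal {v : Val k} (hv : IsVal v) : IsVal (resetVal r v) := by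
  intro i
  unfold resetVal
  split_ifs
  exacts [le_rfl, hv i]

lemma floor_resetVal (v : Val k) (i : Fin (k + 1)) :
    ⌊resetVal r v i⌋ = if i ∈ r then 0 else ⌊v i⌋ := by
  unfold resetVal
  split_ifs
  exacts [Int.floor_zero, rfl]

lemma relFract_resetVal (hr : 0 ∉ r) (v : Val k) (i : Fin (k + 1)) :
    relFract (resetVal r v) i = if i ∈ r then relFract v 0 else relFract v i := by
  have h0 : resetVal r v 0 = v 0 := if_neg hr
  rcases eq_or_ne i 0 with rfl | hi
  · rw [if_neg hr, relFract_zero, relFract_zero, h0]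
  rw [relFract_of_ne_zero _ hi, relFract_of_ne_zero _ hi, relFract_zero, h0, resetVal]
  split_ifs
  exacts [by rw [zero_sub], rfl]

end Reset

section Patterns

variable {k : ℕ} {v₀ v w₀ w : Val k}

/-- The fractional parts of `rel(v₀)` and `rel(v)` as one family indexed by `K⁰ ∪ K¹`, with
`(i, false)` for `i⁰` and `(i, true)` for `i¹`. -/
noncomputable def relPos (v₀ v : Val k) (x : Fin (k + 1) × Bool) : ℝ :=
  relFract (bval v₀ v x.2) x.1

lemma hasPatternOrd_iff_cmp {η : PatSeq k} :
    HasPatternOrd v₀ v η ↔ ∀ (m m' : Fin η.length) (x y : Fin (k + 1) × Bool),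
      x ∈ η.get m → y ∈ η.get m' → cmp (relPos v₀ v x) (relPos v₀ v y) = cmp m m' := by
  refine ⟨fun h m m' x y hx hy => cmp_eq_cmp_iff.2 (h m m' x.2 y.2 x.1 y.1 hx hy), ?_⟩
  exact fun h m m' b b' i i' hi hi' => cmp_eq_cmp_iff.1 (h m m' (i, b) (i', b') hi hi')

lemma exists_patternOf (h₀ : Initial v₀) : ∃ η : PatSeq k, PatternOf v₀ v η := by
  have hmin : ∀ x, relPos v₀ v (0, false) ≤ relPos v₀ v x := fun x =>
    (initial_iff_floor_eq_zero_and_relFract_eq_zero.1 h₀).2.trans_le (relFract_mem_Ico _ _).1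
  refine ⟨levelSets (relPos v₀ v), ⟨?_, fun _ => nonempty_of_mem_levelSets,
    pairwise_disjoint_levelSets, mem_getD_zero_levelSets hmin, exists_mem_levelSets _⟩,
    hasPatternOrd_iff_cmp.2 fun _ _ _ _ => cmp_eq_cmp_of_mem_levelSets⟩
  simpa [mul_comm] using length_levelSets_le (relPos v₀ v)

lemma PatternOf.sameOrder {η : PatSeq k} (hv : PatternOf v₀ v η) (hw : PatternOf w₀ w η) :
    SameOrder (relPos v₀ v) (relPos w₀ w) := by
  obtain ⟨⟨_, _, _, _, hcover⟩, hord⟩ := hv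
  intro x y
  obtain ⟨_, hp, hx⟩ := hcover x
  obtain ⟨_, hp', hy⟩ := hcover y
  obtain ⟨m, rfl⟩ := List.get_of_mem hp
  obtain ⟨m', rfl⟩ := List.get_of_mem hp'
  rw [hasPatternOrd_iff_cmp.1 hord m m' x y hx hy, hasPatternOrd_iff_cmp.1 hw.2 m m' x y hx hy]

lemma PatternOf.of_sameOrder {η : PatSeq k} (hv : PatternOf v₀ v η)
    (h : SameOrder (relPos v₀ v) (relPos w₀ w)) : PatternOf w₀ w η :=
  ⟨hv.1, hasPatternOrd_iff_cmp.2 fun m m' x y hx hy =>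
    (h x y).symm.trans (hasPatternOrd_iff_cmp.1 hv.2 m m' x y hx hy)⟩

lemma PairEquiv.sameOrder (h : PairEquiv v₀ v w₀ w) : SameOrder (relPos v₀ v) (relPos w₀ w) := by
  obtain ⟨⟨η, hv, hw⟩, -⟩ := h
  exact hv.sameOrder hw

lemma pairEquiv_of_sameOrder (h₀ : Initial v₀) (h : SameOrder (relPos v₀ v) (relPos w₀ w))
    (hint₀ : intPart v₀ = intPart w₀) (hint : intPart v = intPart w) :
    PairEquiv v₀ v w₀ w := by
  obtain ⟨η, hη⟩ := exists_patternOf (v := v) h₀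
  exact ⟨⟨η, hη, hη.of_sameOrder h⟩, hint₀, hint⟩

lemma PairEquiv.initial_iff (h : PairEquiv v₀ v w₀ w) (h₀ : Initial v₀) (h₀' : Initial w₀)
    (hv : IsVal v) (hw : IsVal w) : Initial v ↔ Initial w := by
  have hrel : relFract v 0 = relFract v₀ 0 ↔ relFract w 0 = relFract w₀ 0 :=
    h.sameOrder.eq_iff_eq (0, true) (0, false)
  rw [(initial_iff_floor_eq_zero_and_relFract_eq_zero.1 h₀).2,
    (initial_iff_floor_eq_zero_and_relFract_eq_zero.1 h₀').2] at hrel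
  rw [initial_iff_floor_eq_zero_and_relFract_eq_zero,
    initial_iff_floor_eq_zero_and_relFract_eq_zero, hrel, floor_eq_of_intPart_eq hv hw h.2.2]

lemma eq_iff_intPart_eq_and_relFract_eq (hv : IsVal v) (hw : IsVal w) :
    v = w ↔ intPart v = intPart w ∧ ∀ i, relFract v i = relFract w i :=
  ⟨by rintro rfl; exact ⟨rfl, fun _ => rfl⟩, fun ⟨hint, hrel⟩ =>
    eq_of_floor_eq_of_relFract_eq (floor_eq_of_intPart_eq hv hw hint) (funext hrel)⟩

lemma PairEquiv.eq_iff (h : PairEquiv v₀ v w₀ w) (hv₀ : IsVal v₀) (hv : IsVal v)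
    (hw₀ : IsVal w₀) (hw : IsVal w) : v = v₀ ↔ w = w₀ := by
  have hrel : ∀ i, relFract v i = relFract v₀ i ↔ relFract w i = relFract w₀ i := fun i =>
    h.sameOrder.eq_iff_eq (i, true) (i, false)
  rw [eq_iff_intPart_eq_and_relFract_eq hv hv₀, eq_iff_intPart_eq_and_relFract_eq hw hw₀,
    h.2.1, h.2.2, forall_congr' hrel]

end Patterns

section Constraints

variable {k : ℕ} {v w : Val k}

lemma CCmp.evalR_iff_of_cmp_eq {x y d : ℝ} (h : cmp x d = cmp y d) (op : CCmp) :
    op.evalR x d ↔ op.evalR y d := by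
  cases op
  · exact lt_iff_lt_of_cmp_eq_cmp h
  · exact le_iff_le_of_cmp_eq_cmp h
  · exact eq_iff_eq_of_cmp_eq_cmp h
  · exact le_iff_le_of_cmp_eq_cmp (cmp_eq_cmp_symm.1 h)
  · exact lt_iff_lt_of_cmp_eq_cmp (cmp_eq_cmp_symm.1 h)

lemma CC.sat_iff_of_floor_eq_of_cmp_fract_eq (hfloor : ∀ i, ⌊v i⌋ = ⌊w i⌋)
    (hzero : ∀ i : Fin k, cmp (Int.fract (v i.succ)) 0 = cmp (Int.fract (w i.succ)) 0)
    (hfract : SameOrder (fun i : Fin k => Int.fract (v i.succ)) fun i => Int.fract (w i.succ))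
    (c : CC k) : c.sat v ↔ c.sat w := by
  induction c with
  | diff i j op d =>
    refine CCmp.evalR_iff_of_cmp_eq ?_ op
    rw [← Int.cast_natCast, cmp_sub_intCast_eq_then, cmp_sub_intCast_eq_then,
      hfloor, hfloor, hfract i j]
  | single i op d =>
    refine CCmp.evalR_iff_of_cmp_eq ?_ op
    rw [← Int.cast_natCast, cmp_intCast_eq_then, cmp_intCast_eq_then, hfloor, hzero]
  | not c ih => exact not_congr ih
  | and c₁ c₂ ih₁ ih₂ => exact and_congr ih₁ ih₂

lemma SameOrder.cmp_fract_relFract_sub_eq (h : SameOrder (relFract v) (relFract w))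
    (i j : Fin (k + 1)) :
    cmp (Int.fract (relFract v i - relFract v 0)) (Int.fract (relFract v j - relFract v 0)) =
      cmp (Int.fract (relFract w i - relFract w 0)) (Int.fract (relFract w j - relFract w 0)) := by
  rw [cmp_fract_sub_fract_sub (relFract_mem_Ico v i) (relFract_mem_Ico v j) (relFract_mem_Ico v 0),
    cmp_fract_sub_fract_sub (relFract_mem_Ico w i) (relFract_mem_Ico w j) (relFract_mem_Ico w 0),
    h i j]
  simp only [h.lt_iff_lt]

lemma CC.sat_iff_of_sameOrder_relFract (hfloor : ∀ i, ⌊v i⌋ = ⌊w i⌋)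
    (hrel : SameOrder (relFract v) (relFract w)) (c : CC k) : c.sat v ↔ c.sat w := by
  refine CC.sat_iff_of_floor_eq_of_cmp_fract_eq hfloor (fun i => ?_) (fun i j => ?_) c
  · have hi := hrel.cmp_fract_relFract_sub_eq i.succ 0
    rwa [sub_self, sub_self, Int.fract_zero, ← fract_eq_fract_relFract_sub v i.succ_ne_zero,
      ← fract_eq_fract_relFract_sub w i.succ_ne_zero] at hi
  · simp only [fract_eq_fract_relFract_sub _ (Fin.succ_ne_zero _)]
    exact hrel.cmp_fract_relFract_sub_eq i.succ j.succ

lemma PairEquiv.sat_iff {v₀ w₀ : Val k} (h : PairEquiv v₀ v w₀ w) (hv : IsVal v) (hw : IsVal w)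
    (c : CC k) : c.sat v ↔ c.sat w :=
  CC.sat_iff_of_sameOrder_relFract (floor_eq_of_intPart_eq hv hw h.2.2)
    (fun i j => h.sameOrder (i, true) (j, true)) c

end Constraints

section Transport

variable {k : ℕ} {v₀ v w₀ w : Val k}

lemma PairEquiv.exists_strictMonoOn_relFract (h : PairEquiv v₀ v w₀ w) (h₀ : Initial v₀)
    (h₀' : Initial w₀) (u : Val k) :
    ∃ g : ℝ → ℝ, StrictMonoOn g (Set.range (relPos v₀ u)) ∧ (∀ i, g (relFract u i) ∈ Set.Ico 0 1) ∧
      (∀ i, g (relFract v₀ i) = relFract w₀ i) ∧ ∀ i, g (relFract v i) = relFract w i := by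
  obtain ⟨g, hg, hgI, hgrel⟩ := h.sameOrder.exists_strictMonoOn_comp_eq
    (fun _ => (relFract_mem_Ico _ _).2) (fun _ => (relFract_mem_Ico _ _).2) (o := (0, false))
    (initial_iff_floor_eq_zero_and_relFract_eq_zero.1 h₀).2
    (initial_iff_floor_eq_zero_and_relFract_eq_zero.1 h₀').2
    (Set.finite_range (relFract u)) (Set.range_subset_iff.2 (relFract_mem_Ico u))
  refine ⟨g, hg.mono ?_, fun i => hgI (Set.mem_range_self i),
    fun i => congrFun hgrel (i, false), fun i => congrFun hgrel (i, true)⟩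
  rintro _ ⟨⟨i, _ | _⟩, rfl⟩
  exacts [.inl ⟨(i, false), rfl⟩, .inr ⟨i, rfl⟩]

lemma PairEquiv.exists_resetVal_eq {r : Finset (Fin (k + 1))}
    (h : PairEquiv v₀ (resetVal r v) w₀ w) (hr : 0 ∉ r) (h₀ : Initial v₀) (h₀' : Initial w₀)
    (hv : IsVal v) (hw : IsVal w) :
    ∃ w' : Val k, IsVal w' ∧ resetVal r w' = w ∧ PairEquiv v₀ v w₀ w' := by
  obtain ⟨g, hg, hgI, hg₀, hgw⟩ := h.exists_strictMonoOn_relFract h₀ h₀' v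
  obtain ⟨w', hfloor, hrel⟩ := exists_floor_eq_relFract_eq (fun i => ⌊v i⌋) hgI
  have hreset : resetVal r w' = w := by
    refine eq_of_floor_eq_of_relFract_eq (fun i => ?_) (funext fun i => ?_)
    · rw [← floor_eq_of_intPart_eq (isVal_resetVal hv) hw h.2.2, floor_resetVal, floor_resetVal,
        hfloor]
    · rw [← hgw, relFract_resetVal hr, relFract_resetVal hr, hrel, apply_ite g]
  have hpos : relPos w₀ w' = g ∘ relPos v₀ v := by
    funext ⟨i, b⟩
    cases b
    exacts [(hg₀ i).symm, congrFun hrel i]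
  exact ⟨w', isVal_of_floor_eq hv hfloor, hreset, pairEquiv_of_sameOrder h₀
    (hpos ▸ sameOrder_comp_of_strictMonoOn hg) h.2.1
    (intPart_eq_of_floor_eq fun i => (hfloor i).symm)⟩

end Transport

/-- Lemma `backwards`(2). Let `(va,vb) ≈ (vc,vd)` be initialized
pairs. For any `r ⊆ K⁺` and any clock valuation `v1` with `v1↓_r = vb`, there exists a
clock valuation `v2` with: (2.1) `v2↓_r = vd` and `(va,v1) ≈ (vc,v2)`; (2.2) `v1` is
initial iff `v2` is initial, `v1 = va` iff `v2 = vc`, and for every clock constraint `c`,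
`v1 ∈ c` iff `v2 ∈ c`. -/
theorem backwards_reset (k : ℕ) (hk : 1 ≤ k) (va vb vc vd : Val k)
    (hva : IsVal va) (hvb : IsVal vb) (hvc : IsVal vc) (hvd : IsVal vd)
    (h0a : Initial va) (h0c : Initial vc)
    (heq : PairEquiv va vb vc vd)
    (r : Finset (Fin (k+1))) (hr : (0 : Fin (k+1)) ∉ r)
    (v1 : Val k) (hv1 : IsVal v1) (hreset : resetVal r v1 = vb) :
    ∃ v2 : Val k, IsVal v2 ∧
      resetVal r v2 = vd ∧ PairEquiv va v1 vc v2 ∧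
      (Initial v1 ↔ Initial v2) ∧
      (v1 = va ↔ v2 = vc) ∧
      (∀ c : CC k, c.sat v1 ↔ c.sat v2) := by
  subst hreset
  obtain ⟨v2, hv2, hreset, hequiv⟩ := heq.exists_resetVal_eq hr h0a h0c hv1 hvd
  exact ⟨v2, hv2, hreset, hequiv, hequiv.initial_iff h0a h0c hv1 hv2,
    hequiv.eq_iff hva hv1 hvc hv2, hequiv.sat_iff hv1 hv2⟩

end PTApaper
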